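/- Let N ≥ 2, p ∈ (1,∞) and 0 < R₀ < R < R₁. Then there exist nonempty disjoint open sets Ω₁, Ω₂ ⊆ B_{R₁}(0) \ closure(B_{R₀}(0)) such that λ₁(p, Ω₁) < λ₁(p, B_R(0) \ closure(B_{R₀}(0))) and λ₁(p, Ω₂) < λ₁(p, B_{R₁}(0) \ closure(B_R(0))). -/

import Mathlib

open MeasureTheory Metric Set Filter
open scoped RealInnerProductSpace ENNReal Topology

/-- The first Dirichlet eigenvalue of the p-Laplacian on `Ω`, defined variationally as the
infimum of Rayleigh quotients of smooth, not identically zero functions with compact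
support contained in `Ω`. -/
noncomputable def lam1 {N : ℕ} (p : ℝ) (Ω : Set (EuclideanSpace ℝ (Fin N))) : ℝ :=
  sInf { r : ℝ | ∃ u : EuclideanSpace ℝ (Fin N) → ℝ,
    ContDiff ℝ (⊤ : ℕ∞) u ∧ u ≠ 0 ∧ HasCompactSupport u ∧ tsupport u ⊆ Ω ∧
    r = (∫ x in Ω, ‖gradient u x‖ ^ p) / (∫ x in Ω, |u x| ^ p) }

/-- The first standard basis vector `e₁` of `ℝ^N`. -/
noncomputable def e1 (N : ℕ) : EuclideanSpace ℝ (Fin N) :=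
  (WithLp.equiv 2 (Fin N → ℝ)).symm (fun i => if (i : ℕ) = 0 then 1 else 0)

/-- The eccentric annulus `Ω_s = B_{R₁}(0) \ closure (B_{R₀}(s e₁))`. -/
noncomputable def Om (N : ℕ) (R₀ R₁ s : ℝ) : Set (EuclideanSpace ℝ (Fin N)) :=
  ball 0 R₁ \ closure (ball (s • e1 N) R₀)

/-- `u` is a first eigenfunction of the p-Laplacian on `Ω` with eigenvalue `lam`:
C¹ on an open set containing the closure of `Ω`, positive in `Ω`, zero on `∂Ω`, and a weak
solution of `−Δ_p u = lam · u^{p−1}`. -/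
def IsFirstEigenfunction {N : ℕ} (p : ℝ) (Ω : Set (EuclideanSpace ℝ (Fin N)))
    (lam : ℝ) (u : EuclideanSpace ℝ (Fin N) → ℝ) : Prop :=
  (∃ V : Set (EuclideanSpace ℝ (Fin N)), IsOpen V ∧ closure Ω ⊆ V ∧ ContDiffOn ℝ 1 u V) ∧
  (∀ x ∈ Ω, 0 < u x) ∧
  (∀ x ∈ frontier Ω, u x = 0) ∧
  (∀ φ : EuclideanSpace ℝ (Fin N) → ℝ, ContDiff ℝ (⊤ : ℕ∞) φ → HasCompactSupport φ →
    tsupport φ ⊆ Ω →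
    ∫ x in Ω, ‖gradient u x‖ ^ (p - 2) * ⟪gradient u x, gradient φ x⟫ =
      lam * ∫ x in Ω, (u x) ^ (p - 1) * φ x)

/-! It is enough to show that an annulus whose two spheres have different centres has a strictly
smaller first eigenvalue than the concentric annulus of the same radii: then
`Ω₁ = ball v R \ closedBall 0 R₀` and `Ω₂ = ball 0 R₁ \ closedBall v R` work for small `v ≠ 0`.

Integrating the Rayleigh inequality of a near-minimiser in polar coordinates shows that its
restriction to some ray is the profile `f` of a radial near-minimiser `f ∘ ‖·‖`. Cut this function
at a radius `c` where `f` is maximal, recentre the inner and the outer part at the two centres, and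
take the minimum of the two. The energy does not increase and the mass does not decrease, so the
eccentric eigenvalue is at most the concentric one. The inequality is strict because the new
function equals its maximum `f c` on a ball whose radius depends only on the annulus: adding a bump
of height `η * f c` there gains mass of order `η` at an energy cost of order `η ^ p`, and `p > 1`.
Relative to `f c ^ p` this gain is the same for all near-minimisers, hence it survives in the
infimum. -/

section LpMass

variable {X : Type*} [MeasurableSpace X]

/-- The denominator `∫ |u| ^ p` of the Rayleigh quotient. -/
noncomputable def lpMass (μ : Measure X) (p : ℝ) (u : X → ℝ) : ℝ :=
  ∫ x, |u x| ^ p ∂μ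

lemma lpMass_nonneg (μ : Measure X) (p : ℝ) (u : X → ℝ) : 0 ≤ lpMass μ p u :=
  integral_nonneg fun _ ↦ by positivity

variable [TopologicalSpace X] {μ : Measure X} [IsFiniteMeasureOnCompacts μ] {p : ℝ} {u : X → ℝ}

lemma integrable_of_hasCompactSupport_of_norm_le {F : Type*} [NormedAddCommGroup F] {h : X → F}
    {C : ℝ} (hm : AEStronglyMeasurable h μ) (hc : HasCompactSupport h) (hC : ∀ x, ‖h x‖ ≤ C) :
    Integrable h μ :=
  (Measure.integrableOn_of_bounded hc.isCompact.measure_ne_top hm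
    (ae_of_all _ hC)).integrable_of_forall_notMem_eq_zero
    fun _ hx ↦ image_eq_zero_of_notMem_tsupport hx

variable [OpensMeasurableSpace X]

lemma integrable_abs_rpow (hp : 0 < p) (hu : Continuous u)
    (hc : HasCompactSupport u) : Integrable (fun x ↦ |u x| ^ p) μ := by
  refine (hu.abs.rpow_const fun _ ↦ .inr hp.le).integrable_of_hasCompactSupport ?_
  exact hc.comp_left (g := fun t ↦ |t| ^ p) (by simp [hp.ne'])

lemma lpMass_pos [μ.IsOpenPosMeasure] (hp : 0 < p)
    (hu : Continuous u) (hc : HasCompactSupport u) (h0 : u ≠ 0) : 0 < lpMass μ p u := by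
  obtain ⟨x, hx⟩ := Function.ne_iff.1 h0
  refine (hu.abs.rpow_const fun _ ↦ .inr hp.le).integral_pos_of_hasCompactSupport_nonneg_nonzero
    (hc.comp_left (g := fun t ↦ |t| ^ p) (by simp [hp.ne'])) (fun _ ↦ by positivity) (x := x) ?_
  exact (Real.rpow_pos_of_pos (abs_pos.2 hx) p).ne'

end LpMass

section Gradient

variable {E : Type*} [NormedAddCommGroup E] [NormedSpace ℝ E] {f g : E → ℝ} {x : E}

lemma fderiv_min_of_le (hf : DifferentiableAt ℝ f x)
    (hfg : DifferentiableAt ℝ (fun y ↦ min (f y) (g y)) x) (h : f x ≤ g x) :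
    fderiv ℝ (fun y ↦ min (f y) (g y)) x = fderiv ℝ f x := by
  have hmin : IsLocalMin (fun y ↦ f y - min (f y) (g y)) x :=
    Eventually.of_forall fun y ↦ by simp [min_eq_left h]
  have h0 := hmin.fderiv_eq_zero
  rw [fderiv_fun_sub hf hfg, sub_eq_zero] at h0
  exact h0.symm

lemma norm_fderiv_abs_le (hf : DifferentiableAt ℝ f x) :
    ‖fderiv ℝ (fun y ↦ |f y|) x‖ ≤ ‖fderiv ℝ f x‖ := by
  rcases eq_or_ne (f x) 0 with h | h
  · have hmin : IsLocalMin (fun y ↦ |f y|) x := Eventually.of_forall fun y ↦ by simp [h]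
    simp [hmin.fderiv_eq_zero]
  · rcases h.lt_or_gt with h | h
    · rw [hf.hasFDerivAt.abs_of_neg h |>.fderiv, norm_neg]
    · rw [hf.hasFDerivAt.abs_of_pos h |>.fderiv]

end Gradient

section Energy

variable {E : Type*} [NormedAddCommGroup E] [NormedSpace ℝ E] [MeasurableSpace E]

/-- The `p`-Dirichlet energy `∫ ‖∇u‖ ^ p`. The gradient is the Fréchet derivative, which a Lipschitz
function on a finite-dimensional space has almost everywhere. -/
noncomputable def dirichletEnergy (μ : Measure E) (p : ℝ) (u : E → ℝ) : ℝ :=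
  ∫ x, ‖fderiv ℝ u x‖ ^ p ∂μ

lemma dirichletEnergy_nonneg (μ : Measure E) (p : ℝ) (u : E → ℝ) : 0 ≤ dirichletEnergy μ p u :=
  integral_nonneg fun _ ↦ by positivity

variable [BorelSpace E] {μ : Measure E} {p : ℝ} {f g u : E → ℝ} {K L : NNReal}

lemma dirichletEnergy_comp_sub [μ.IsAddRightInvariant] (p : ℝ) (u : E → ℝ) (z : E) :
    dirichletEnergy μ p (fun x ↦ u (x - z)) = dirichletEnergy μ p u := by
  simp only [dirichletEnergy, fderiv_comp_sub]
  exact integral_sub_right_eq_self (fun x ↦ ‖fderiv ℝ u x‖ ^ p) z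

lemma integrable_norm_fderiv_rpow [IsFiniteMeasureOnCompacts μ] (hp : 0 < p)
    (hu : LipschitzWith K u) (hc : HasCompactSupport (fderiv ℝ u)) :
    Integrable (fun x ↦ ‖fderiv ℝ u x‖ ^ p) μ := by
  refine integrable_of_hasCompactSupport_of_norm_le (C := (K : ℝ) ^ p)
    ((measurable_fderiv ℝ u).norm.pow_const p).aestronglyMeasurable
    (hc.comp_left (g := fun l ↦ ‖l‖ ^ p) (by simp [hp.ne'])) fun x ↦ ?_
  rw [Real.norm_of_nonneg (by positivity)]
  gcongr
  exact norm_fderiv_le_of_lipschitz ℝ hu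

section Haar

variable [FiniteDimensional ℝ E] [μ.IsAddHaarMeasure]

lemma dirichletEnergy_min_le (hp : 0 < p) (hf : LipschitzWith K f) (hg : LipschitzWith L g)
    (hcf : HasCompactSupport (fderiv ℝ f)) (hcg : HasCompactSupport (fderiv ℝ g)) :
    dirichletEnergy μ p (fun x ↦ min (f x) (g x)) ≤
      dirichletEnergy μ p f + dirichletEnergy μ p g := by
  have If := integrable_norm_fderiv_rpow (μ := μ) hp hf hcf
  have Ig := integrable_norm_fderiv_rpow (μ := μ) hp hg hcg
  rw [dirichletEnergy, dirichletEnergy, dirichletEnergy, ← integral_add If Ig]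
  refine integral_mono_of_nonneg (ae_of_all _ fun _ ↦ by positivity) (If.add Ig) ?_
  filter_upwards [hf.ae_differentiableAt (μ := μ), hg.ae_differentiableAt (μ := μ),
    (hf.min hg).ae_differentiableAt (μ := μ)] with x hfx hgx hmin
  rcases le_total (f x) (g x) with h | h
  · rw [fderiv_min_of_le hfx hmin h]
    exact le_add_of_nonneg_right (by positivity)
  · simp only [min_comm (f _)] at hmin ⊢
    rw [fderiv_min_of_le hgx hmin h]
    exact le_add_of_nonneg_left (by positivity)

lemma dirichletEnergy_add (hp : 0 < p) (hf : LipschitzWith K f) (hg : LipschitzWith L g)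
    (hcf : HasCompactSupport (fderiv ℝ f)) (hcg : HasCompactSupport (fderiv ℝ g))
    (h : ∀ x, fderiv ℝ f x = 0 ∨ fderiv ℝ g x = 0) :
    dirichletEnergy μ p (fun x ↦ f x + g x) = dirichletEnergy μ p f + dirichletEnergy μ p g := by
  rw [dirichletEnergy, dirichletEnergy, dirichletEnergy,
    ← integral_add (integrable_norm_fderiv_rpow hp hf hcf) (integrable_norm_fderiv_rpow hp hg hcg)]
  refine integral_congr_ae ?_
  filter_upwards [hf.ae_differentiableAt (μ := μ), hg.ae_differentiableAt (μ := μ)] with x hfx hgx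
  rw [fderiv_fun_add hfx hgx]
  rcases h x with h | h <;> simp [h, hp.ne']

end Haar

end Energy

section Mollification

open scoped Convolution
open ContinuousLinearMap (lsmul)

variable {E : Type*} [NormedAddCommGroup E] [NormedSpace ℝ E] [FiniteDimensional ℝ E]
  [MeasurableSpace E] [BorelSpace E] {μ : Measure E} [μ.IsAddHaarMeasure]
  {F : Type*} [NormedAddCommGroup F] [NormedSpace ℝ F]

lemma hasFDerivAt_convolution_of_lipschitzWith {K : NNReal} {ψ g : E → ℝ} (hψ : Continuous ψ)
    (hψc : HasCompactSupport ψ) (hg : LipschitzWith K g) (x : E) :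
    HasFDerivAt (ψ ⋆[lsmul ℝ ℝ, μ] g) ((ψ ⋆[lsmul ℝ ℝ, μ] fderiv ℝ g) x) x := by
  have hcont (x' : E) : Continuous fun y ↦ ψ y • g (x' - y) :=
    hψ.smul (hg.continuous.comp (continuous_const.sub continuous_id))
  have hmeas : Measurable fun y ↦ fderiv ℝ g (x - y) :=
    (measurable_fderiv ℝ g).comp (measurable_const.sub measurable_id)
  refine (hasFDerivAt_integral_of_dominated_loc_of_lip' (𝕜 := ℝ) (bound := fun y ↦ ‖ψ y‖ * K)
    univ_mem (fun x' _ ↦ (hcont x').aestronglyMeasurable)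
    ((hcont x).integrable_of_hasCompactSupport hψc.smul_right)
    (hψ.measurable.smul hmeas).aestronglyMeasurable (ae_of_all _ fun y x' _ ↦ ?_)
    ((hψ.integrable_of_hasCompactSupport hψc).norm.mul_const _) ?_).2
  · simp only [← smul_sub, norm_smul, mul_assoc]
    gcongr
    simpa using hg.norm_sub_le (x' - y) (x - y)
  · filter_upwards [(quasiMeasurePreserving_sub_left μ x).ae
      (hg.ae_differentiableAt (μ := μ))] with y hy
    exact ((hasFDerivAt_comp_sub y).2 hy.hasFDerivAt).const_smul (ψ y)

lemma support_normed_convolution_subset (φ : ContDiffBump (0 : E)) (h : E → F) :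
    Function.support (φ.normed μ ⋆[lsmul ℝ ℝ, μ] h) ⊆ cthickening φ.rOut (tsupport h) := by
  refine (support_convolution_subset _).trans ?_
  rw [φ.support_normed_eq]
  rintro _ ⟨y, hy, z, hz, rfl⟩
  refine mem_cthickening_of_dist_le _ z _ _ (subset_tsupport h hz) ?_
  simpa using (mem_ball_zero_iff.1 hy).le

lemma tendsto_integral_norm_rpow_normed_convolution [CompleteSpace F]
    {φ : ℕ → ContDiffBump (0 : E)} {p K C : ℝ} (hp : 0 < p)
    (hφ : Tendsto (fun n ↦ (φ n).rOut) atTop (𝓝 0)) (hφK : ∀ n, (φ n).rOut ≤ K * (φ n).rIn)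
    {h : E → F} (hm : AEStronglyMeasurable h μ) (hc : HasCompactSupport h) (hC : ∀ x, ‖h x‖ ≤ C) :
    Tendsto (fun n ↦ ∫ x, ‖((φ n).normed μ ⋆[lsmul ℝ ℝ, μ] h) x‖ ^ p ∂μ) atTop
      (𝓝 (∫ x, ‖h x‖ ^ p ∂μ)) := by
  have hC0 : 0 ≤ C := (norm_nonneg _).trans (hC 0)
  have hint : Integrable h μ := integrable_of_hasCompactSupport_of_norm_le hm hc hC
  have hbound (n : ℕ) (x : E) : ‖((φ n).normed μ ⋆[lsmul ℝ ℝ, μ] h) x‖ ≤ C := by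
    simpa using dist_convolution_le (x₀ := x) (z₀ := (0 : F)) hC0 (φ n).support_normed_eq.subset
      (φ n).nonneg_normed (φ n).integral_normed hm fun y _ ↦ by simpa using hC y
  have hcont (n : ℕ) : Continuous ((φ n).normed μ ⋆[lsmul ℝ ℝ, μ] h) :=
    (φ n).hasCompactSupport_normed.continuous_convolution_left _ (φ n).continuous_normed
      hint.locallyIntegrable
  have hcomp : IsCompact (cthickening 1 (tsupport h)) := hc.isCompact.cthickening
  refine tendsto_integral_filter_of_dominated_convergence
    ((cthickening 1 (tsupport h)).indicator fun _ ↦ C ^ p)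
    (.of_forall fun n ↦
      ((hcont n).norm.rpow_const fun _ ↦ .inr hp.le).aestronglyMeasurable) ?_
    ((integrable_indicator_iff hcomp.isClosed.measurableSet).2
      (integrableOn_const hcomp.measure_ne_top)) ?_
  · filter_upwards [hφ.eventually_le_const one_pos] with n hn
    refine ae_of_all _ fun x ↦ ?_
    rw [Real.norm_of_nonneg (by positivity)]
    by_cases hx : x ∈ cthickening 1 (tsupport h)
    · rw [indicator_of_mem hx]
      exact Real.rpow_le_rpow (norm_nonneg _) (hbound n x) hp.le
    · have h0 : ((φ n).normed μ ⋆[lsmul ℝ ℝ, μ] h) x = 0 :=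
        Function.notMem_support.1 fun h' ↦
          hx (cthickening_mono hn _ (support_normed_convolution_subset _ h h'))
      simp [h0, hx, hp.ne']
  · filter_upwards [ContDiffBump.ae_convolution_tendsto_right_of_locallyIntegrable hφ
      (.of_forall hφK) hint.locallyIntegrable] with x hx
    exact hx.norm.rpow_const (.inr hp.le)

lemma exists_contDiff_tendsto_lpMass_dirichletEnergy {p : ℝ} (hp : 0 < p) {Ω : Set E}
    (hΩ : IsOpen Ω) {g : E → ℝ} {K : NNReal} (hg : LipschitzWith K g) (hc : HasCompactSupport g)
    (hgΩ : tsupport g ⊆ Ω) :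
    ∃ G : ℕ → E → ℝ, (∀ n, ContDiff ℝ (⊤ : ℕ∞) (G n)) ∧ (∀ n, HasCompactSupport (G n)) ∧
      (∀ n, tsupport (G n) ⊆ Ω) ∧
      Tendsto (fun n ↦ lpMass μ p (G n)) atTop (𝓝 (lpMass μ p g)) ∧
      Tendsto (fun n ↦ dirichletEnergy μ p (G n)) atTop (𝓝 (dirichletEnergy μ p g)) := by
  obtain ⟨δ, hδ, hδΩ⟩ := hc.isCompact.exists_cthickening_subset_open hΩ hgΩ
  have hr (n : ℕ) : 0 < δ / (n + 1) := by positivity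
  let φ (n : ℕ) : ContDiffBump (0 : E) :=
    ⟨δ / (n + 1) / 2, δ / (n + 1), half_pos (hr n), half_lt_self (hr n)⟩
  have hφ : Tendsto (fun n ↦ (φ n).rOut) atTop (𝓝 0) :=
    tendsto_const_nhds.div_atTop
      (tendsto_natCast_atTop_atTop.atTop_add tendsto_const_nhds)
  have hφK (n : ℕ) : (φ n).rOut ≤ 2 * (φ n).rIn := (mul_div_cancel₀ _ two_ne_zero).ge
  have hsupp (n : ℕ) :
      tsupport ((φ n).normed μ ⋆[lsmul ℝ ℝ, μ] g) ⊆ cthickening δ (tsupport g) :=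
    (closure_minimal (support_normed_convolution_subset _ g) isClosed_cthickening).trans
      (cthickening_mono (div_le_self hδ.le (by simp)) _)
  obtain ⟨C, hC⟩ := hg.continuous.bounded_above_of_compact_support hc
  refine ⟨fun n ↦ (φ n).normed μ ⋆[lsmul ℝ ℝ, μ] g, fun n ↦ ?_, fun n ↦ ?_,
    fun n ↦ (hsupp n).trans hδΩ, ?_, ?_⟩
  · exact (φ n).hasCompactSupport_normed.contDiff_convolution_left _ (φ n).contDiff_normed
      hg.continuous.locallyIntegrable
  · exact hc.isCompact.cthickening.of_isClosed_subset (isClosed_tsupport _) (hsupp n)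
  · exact tendsto_integral_norm_rpow_normed_convolution hp hφ hφK
      hg.continuous.aestronglyMeasurable hc hC
  · have hfderiv (n : ℕ) (x : E) : fderiv ℝ ((φ n).normed μ ⋆[lsmul ℝ ℝ, μ] g) x =
        ((φ n).normed μ ⋆[lsmul ℝ ℝ, μ] fderiv ℝ g) x :=
      (hasFDerivAt_convolution_of_lipschitzWith (φ n).continuous_normed
        (φ n).hasCompactSupport_normed hg x).fderiv
    simp only [dirichletEnergy, hfderiv]
    exact tendsto_integral_norm_rpow_normed_convolution hp hφ hφK
      (measurable_fderiv ℝ g).aestronglyMeasurable (hc.fderiv ℝ)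
      fun x ↦ norm_fderiv_le_of_lipschitz ℝ hg

end Mollification

section FirstEigenvalue

variable {N : ℕ} {p : ℝ} {Ω : Set (EuclideanSpace ℝ (Fin N))} {u : EuclideanSpace ℝ (Fin N) → ℝ}

lemma setIntegral_rayleigh_eq (hp : 0 < p) (hs : tsupport u ⊆ Ω) :
    (∫ x in Ω, ‖gradient u x‖ ^ p) / (∫ x in Ω, |u x| ^ p) =
      dirichletEnergy volume p u / lpMass volume p u := by
  have hgrad (x : EuclideanSpace ℝ (Fin N)) : ‖gradient u x‖ = ‖fderiv ℝ u x‖ := by simp [gradient]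
  simp only [hgrad]
  congr 1 <;> refine setIntegral_eq_integral_of_forall_compl_eq_zero fun x hx ↦ ?_
  · rw [image_eq_zero_of_notMem_tsupport fun h ↦ hx (hs (tsupport_fderiv_subset ℝ h)), norm_zero,
      Real.zero_rpow hp.ne']
  · rw [image_eq_zero_of_notMem_tsupport fun h ↦ hx (hs h), abs_zero, Real.zero_rpow hp.ne']

lemma lam1_nonneg (p : ℝ) (Ω : Set (EuclideanSpace ℝ (Fin N))) : 0 ≤ lam1 p Ω := by
  refine Real.sInf_nonneg ?_
  rintro _ ⟨u, -, -, -, -, rfl⟩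
  exact div_nonneg (integral_nonneg fun _ ↦ by positivity) (integral_nonneg fun _ ↦ by positivity)

lemma lam1_mul_lpMass_le_of_contDiff (hp : 0 < p) (hu : ContDiff ℝ (⊤ : ℕ∞) u)
    (hc : HasCompactSupport u) (hs : tsupport u ⊆ Ω) :
    lam1 p Ω * lpMass volume p u ≤ dirichletEnergy volume p u := by
  rcases eq_or_ne u 0 with rfl | hu0
  · simp [lpMass, dirichletEnergy, hp.ne']
  rw [← le_div_iff₀ (lpMass_pos hp hu.continuous hc hu0), ← setIntegral_rayleigh_eq hp hs]
  refine csInf_le ⟨0, ?_⟩ ⟨u, hu, hu0, hc, hs, rfl⟩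
  rintro _ ⟨v, -, -, -, -, rfl⟩
  exact div_nonneg (integral_nonneg fun _ ↦ by positivity) (lpMass_nonneg _ p v)

lemma lam1_mul_lpMass_le (hp : 0 < p) (hΩ : IsOpen Ω) {K : NNReal} (hu : LipschitzWith K u)
    (hc : HasCompactSupport u) (hs : tsupport u ⊆ Ω) :
    lam1 p Ω * lpMass volume p u ≤ dirichletEnergy volume p u := by
  obtain ⟨G, hG, hGc, hGs, hmass, henergy⟩ :=
    exists_contDiff_tendsto_lpMass_dirichletEnergy (μ := volume) hp hΩ hu hc hs
  exact le_of_tendsto_of_tendsto' (hmass.const_mul _) henergy fun n ↦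
    lam1_mul_lpMass_le_of_contDiff hp (hG n) (hGc n) (hGs n)

lemma le_lam1 (hp : 0 < p) (hΩ : IsOpen Ω) (hne : Ω.Nonempty) {l : ℝ}
    (h : ∀ u : EuclideanSpace ℝ (Fin N) → ℝ, ContDiff ℝ (⊤ : ℕ∞) u → HasCompactSupport u →
      tsupport u ⊆ Ω → l * lpMass volume p u ≤ dirichletEnergy volume p u) :
    l ≤ lam1 p Ω := by
  refine le_csInf ?_ ?_
  · obtain ⟨x, hx⟩ := hne
    obtain ⟨f, hf, hfc, hfs, -, hf1⟩ := exists_contDiff_tsupport_subset (n := ⊤) (hΩ.mem_nhds hx)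
    exact ⟨_, f, hfs, fun h0 ↦ by simp [h0] at hf1, hfc, hf, rfl⟩
  · rintro _ ⟨u, hu, hu0, hc, hs, rfl⟩
    rw [setIntegral_rayleigh_eq hp hs, le_div_iff₀ (lpMass_pos hp hu.continuous hc hu0)]
    exact h u hu hc hs

end FirstEigenvalue

section Poincare

lemma abs_integral_rpow_le_integral_abs_rpow {α : Type*} [MeasurableSpace α] {ν : Measure α}
    [IsProbabilityMeasure ν] {p : ℝ} (hp : 1 ≤ p) {h : α → ℝ} (hi : Integrable h ν)
    (hip : Integrable (fun a ↦ |h a| ^ p) ν) : |∫ a, h a ∂ν| ^ p ≤ ∫ a, |h a| ^ p ∂ν :=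
  calc |∫ a, h a ∂ν| ^ p ≤ (∫ a, |h a| ∂ν) ^ p := by
        gcongr
        exact abs_integral_le_integral_abs
    _ ≤ ∫ a, |h a| ^ p ∂ν :=
        (convexOn_rpow hp).map_integral_le
          (continuousOn_id.rpow_const fun _ _ ↦ .inr (zero_le_one.trans hp)) isClosed_Ici
          (ae_of_all _ fun a ↦ abs_nonneg (h a)) hi.abs hip

variable {E : Type*} [NormedAddCommGroup E] [NormedSpace ℝ E] {p : ℝ} {u : E → ℝ}

lemma abs_sub_rpow_le_integral_norm_fderiv_rpow (hp : 1 ≤ p) (hu : ContDiff ℝ 1 u) (x w : E) :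
    |u (x + w) - u x| ^ p ≤ ‖w‖ ^ p * ∫ t in (0 : ℝ)..1, ‖fderiv ℝ u (x + t • w)‖ ^ p := by
  have hp0 : 0 ≤ p := zero_le_one.trans hp
  have hline : Continuous fun t : ℝ ↦ x + t • w := by fun_prop
  have hD : Continuous fun t : ℝ ↦ fderiv ℝ u (x + t • w) :=
    (hu.continuous_fderiv one_ne_zero).comp hline
  have hDw : Continuous fun t : ℝ ↦ fderiv ℝ u (x + t • w) w := hD.clm_apply continuous_const
  have hftc : ∫ t in (0 : ℝ)..1, fderiv ℝ u (x + t • w) w = u (x + w) - u x := by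
    have hderiv (t : ℝ) : HasDerivAt (fun s : ℝ ↦ u (x + s • w)) (fderiv ℝ u (x + t • w) w) t := by
      refine ((hu.differentiable one_ne_zero) _).hasFDerivAt.comp_hasDerivAt t ?_
      simpa using ((hasDerivAt_id t).smul_const w).const_add x
    simpa using intervalIntegral.integral_eq_sub_of_hasDerivAt (fun t _ ↦ hderiv t)
      (hDw.intervalIntegrable 0 1)
  have : IsProbabilityMeasure (volume.restrict (Ioc (0 : ℝ) 1)) := ⟨by simp⟩
  have hDwp : Continuous fun t : ℝ ↦ |fderiv ℝ u (x + t • w) w| ^ p :=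
    hDw.abs.rpow_const fun _ ↦ .inr hp0
  calc |u (x + w) - u x| ^ p
      ≤ ∫ t in (0 : ℝ)..1, |fderiv ℝ u (x + t • w) w| ^ p := by
        rw [← hftc]
        simp only [intervalIntegral.integral_of_le zero_le_one]
        exact abs_integral_rpow_le_integral_abs_rpow hp
          (hDw.intervalIntegrable 0 1).1 (hDwp.intervalIntegrable 0 1).1
    _ ≤ ∫ t in (0 : ℝ)..1, ‖w‖ ^ p * ‖fderiv ℝ u (x + t • w)‖ ^ p := by
        refine intervalIntegral.integral_mono_on zero_le_one (hDwp.intervalIntegrable 0 1)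
          (((hD.norm.rpow_const fun _ ↦ .inr hp0).const_mul _).intervalIntegrable 0 1) fun t _ ↦ ?_
        rw [← Real.mul_rpow (norm_nonneg _) (norm_nonneg _), mul_comm ‖w‖]
        gcongr
        exact (fderiv ℝ u (x + t • w)).le_opNorm w
    _ = ‖w‖ ^ p * ∫ t in (0 : ℝ)..1, ‖fderiv ℝ u (x + t • w)‖ ^ p :=
        intervalIntegral.integral_const_mul _ _

variable [MeasurableSpace E] [BorelSpace E] [FiniteDimensional ℝ E] {μ : Measure E}
  [μ.IsAddHaarMeasure]

lemma integral_abs_sub_rpow_le (hp : 1 ≤ p) (hu : ContDiff ℝ 1 u) (hc : HasCompactSupport u)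
    (w : E) : ∫ x, |u (x + w) - u x| ^ p ∂μ ≤ ‖w‖ ^ p * dirichletEnergy μ p u := by
  have hp0 : 0 < p := one_pos.trans_le hp
  set G : E → ℝ := fun x ↦ ‖fderiv ℝ u x‖ ^ p with hG
  have hGc : Continuous G :=
    (hu.continuous_fderiv one_ne_zero).norm.rpow_const fun _ ↦ .inr hp0.le
  have hGi : Integrable G μ := hGc.integrable_of_hasCompactSupport
    ((hc.fderiv ℝ).comp_left (g := fun l ↦ ‖l‖ ^ p) (by simp [hp0.ne']))
  have hprod : Integrable (fun q : E × ℝ ↦ G (q.1 + q.2 • w))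
      (μ.prod (volume.restrict (Ioc (0 : ℝ) 1))) := by
    refine (integrable_prod_iff' (hGc.comp (by fun_prop)).aestronglyMeasurable).2
      ⟨ae_of_all _ fun t ↦ hGi.comp_add_right (t • w), ?_⟩
    exact (integrable_const (∫ x, ‖G x‖ ∂μ)).congr
      (ae_of_all _ fun t ↦ (integral_add_right_eq_self (fun x ↦ ‖G x‖) (t • w)).symm)
  have hfubini : ∫ x, (∫ t in (0 : ℝ)..1, G (x + t • w)) ∂μ = dirichletEnergy μ p u := by
    simp only [intervalIntegral.integral_of_le zero_le_one]
    rw [integral_integral_swap hprod]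
    simp_rw [fun t : ℝ ↦ integral_add_right_eq_self (μ := μ) G (t • w)]
    simp [dirichletEnergy, hG]
  rw [← hfubini, ← integral_const_mul]
  refine integral_mono_of_nonneg (ae_of_all _ fun x ↦ by positivity) ?_
    (ae_of_all _ fun x ↦ abs_sub_rpow_le_integral_norm_fderiv_rpow hp hu x w)
  simp only [intervalIntegral.integral_of_le zero_le_one]
  exact hprod.integral_prod_left.const_mul _

lemma lpMass_le_mul_dirichletEnergy [Nontrivial E] (hp : 1 ≤ p) {b : ℝ} (hb : 0 ≤ b)
    (hu : ContDiff ℝ 1 u) (hs : tsupport u ⊆ closedBall 0 b) :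
    lpMass μ p u ≤ (2 * b + 1) ^ p * dirichletEnergy μ p u := by
  have hp0 : 0 < p := one_pos.trans_le hp
  have hc : HasCompactSupport u :=
    (isCompact_closedBall 0 b).of_isClosed_subset (isClosed_tsupport u) hs
  have hout {x : E} (hx : b < ‖x‖) : u x = 0 :=
    image_eq_zero_of_notMem_tsupport fun h ↦ hx.not_ge (mem_closedBall_zero_iff.1 (hs h))
  -- Translation by a vector longer than the diameter moves `closedBall 0 b` off itself, so that
  -- `|u x| ≤ |u (x + w) - u x|` everywhere.
  obtain ⟨w, hw⟩ := exists_norm_eq E (show 0 ≤ 2 * b + 1 by positivity)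
  rw [← hw]
  refine le_trans (integral_mono_of_nonneg (ae_of_all _ fun _ ↦ by positivity) ?_
    (ae_of_all _ fun x ↦ ?_)) (integral_abs_sub_rpow_le hp hu hc w)
  · have hcw : HasCompactSupport fun x ↦ u (x + w) :=
      hc.comp_homeomorph (Homeomorph.addRight w)
    exact integrable_abs_rpow hp0 ((hu.continuous.comp (by fun_prop)).sub hu.continuous)
      (hcw.sub hc)
  · dsimp only
    rcases le_or_gt ‖x‖ b with hx | hx
    · have hxw : b < ‖x + w‖ := by linarith [norm_le_add_norm_add' x w]
      rw [hout hxw, zero_sub, abs_neg]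
    · rw [hout hx, abs_zero, Real.zero_rpow hp0.ne']
      positivity

lemma lam1_pos {N : ℕ} [NeZero N] (hp : 1 ≤ p) {Ω : Set (EuclideanSpace ℝ (Fin N))}
    (hΩ : IsOpen Ω) (hne : Ω.Nonempty) (hb : Bornology.IsBounded Ω) : 0 < lam1 p Ω := by
  obtain ⟨b, hb0, hb⟩ := hb.subset_closedBall_lt 0 0
  have hC : 0 < (2 * b + 1) ^ p := by positivity
  refine (inv_pos.2 hC).trans_le (le_lam1 (one_pos.trans_le hp) hΩ hne fun u hu _ hs ↦ ?_)
  rw [inv_mul_le_iff₀ hC]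
  exact lpMass_le_mul_dirichletEnergy hp hb0.le (hu.of_le (by simp)) (hs.trans hb)

end Poincare

/-- A radial profile for the annulus of radii `a < b`: a nonnegative Lipschitz function on the line
whose support is a compact subset of `(a, b)`. -/
structure IsAnnularProfile (a b : ℝ) (f : ℝ → ℝ) : Prop where
  exists_lipschitzWith : ∃ K, LipschitzWith K f
  nonneg : ∀ r, 0 ≤ f r
  tsupport_subset : tsupport f ⊆ Ioo a b

lemma isAnnularProfile_abs_smul {E : Type*} [NormedAddCommGroup E] [NormedSpace ℝ E] {u : E → ℝ}
    {ω : E} {a b : ℝ} (ha : 0 ≤ a) (hu : ContDiff ℝ 1 u) (hc : HasCompactSupport u)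
    (hs : tsupport u ⊆ ball 0 b \ closedBall 0 a) (hω : ‖ω‖ = 1) :
    IsAnnularProfile a b fun r ↦ |u (max r 0 • ω)| where
  exists_lipschitzWith := by
    obtain ⟨K, hK⟩ := hu.lipschitzWith_of_hasCompactSupport hc one_ne_zero
    have hray : LipschitzWith 1 fun r : ℝ ↦ max r 0 • ω := LipschitzWith.of_dist_le_mul fun r s ↦ by
      rw [dist_eq_norm, ← sub_smul, norm_smul, hω, mul_one, NNReal.coe_one, one_mul]
      exact abs_max_sub_max_le_abs r s 0
    exact ⟨_, lipschitzWith_one_norm.comp (hK.comp hray)⟩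
  nonneg _ := abs_nonneg _
  tsupport_subset := by
    have hcont : Continuous fun r : ℝ ↦ max r 0 • ω := by fun_prop
    have hsub : tsupport (fun r ↦ |u (max r 0 • ω)|) ⊆ (fun r : ℝ ↦ max r 0 • ω) ⁻¹' tsupport u :=
      closure_minimal (fun r hr ↦ subset_tsupport u (abs_ne_zero.1 hr))
        ((isClosed_tsupport u).preimage hcont)
    intro r hr
    have h := hs (hsub hr)
    simp only [Set.mem_sdiff, mem_ball_zero_iff, mem_closedBall_zero_iff, norm_smul, hω, mul_one,
      Real.norm_of_nonneg (le_max_right r 0), not_le, max_lt_iff, lt_max_iff] at h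
    exact ⟨h.2.resolve_right ha.not_gt, h.1.1⟩

section Ray

variable {E : Type*} [NormedAddCommGroup E] [NormedSpace ℝ E] [FiniteDimensional ℝ E]
  [MeasurableSpace E] [BorelSpace E] {μ : Measure E} [μ.IsAddHaarMeasure]

section Integral

variable [Nontrivial E] {F : Type*} [NormedAddCommGroup F] [NormedSpace ℝ F]

lemma integral_eq_integral_toSphere_prod (h : E → F) :
    ∫ x, h x ∂μ = ∫ z : sphere (0 : E) 1 × Ioi (0 : ℝ), h ((z.2 : ℝ) • (z.1 : E))
      ∂(μ.toSphere.prod (Measure.volumeIoiPow (Module.finrank ℝ E - 1))) := by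
  calc ∫ x, h x ∂μ = ∫ x : ({(0)}ᶜ : Set E), h x ∂(μ.comap (↑)) := by
        rw [integral_subtype_comap (measurableSet_singleton _).compl h, restrict_compl_singleton]
    _ = _ := by
        rw [← μ.measurePreserving_homeomorphUnitSphereProd.integral_comp
          (Homeomorph.measurableEmbedding _)]
        refine integral_congr_ae (ae_of_all _ fun x ↦ ?_)
        have hx : ‖(x : E)‖ ≠ 0 := norm_ne_zero_iff.2 x.2
        simp [smul_smul, hx]

lemma integral_norm_smul (h : E → F) (ω : E) :
    ∫ x, h (‖x‖ • ω) ∂μ = μ.toSphere.real univ •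
      ∫ r : Ioi (0 : ℝ), h ((r : ℝ) • ω) ∂(Measure.volumeIoiPow (Module.finrank ℝ E - 1)) := by
  rw [integral_eq_integral_toSphere_prod, ← integral_fun_snd]
  refine integral_congr_ae (ae_of_all _ fun z ↦ ?_)
  simp [norm_smul, abs_of_pos (show (0 : ℝ) < z.2 from z.2.2)]

lemma exists_integral_norm_smul_pos {h : E → ℝ} (hpos : 0 < ∫ x, h x ∂μ) :
    ∃ ω : E, ‖ω‖ = 1 ∧ 0 < ∫ x, h (‖x‖ • ω) ∂μ := by
  by_contra! hray
  have hsphere : 0 < μ.toSphere.real univ :=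
    ENNReal.toReal_pos (Measure.measure_univ_ne_zero.2 μ.toSphere_ne_zero) (measure_ne_top _ _)
  rw [integral_eq_integral_toSphere_prod, integral_prod _ (.of_integral_ne_zero
    (integral_eq_integral_toSphere_prod (μ := μ) h ▸ hpos.ne'))] at hpos
  refine hpos.not_ge (integral_nonpos fun ω ↦ ?_)
  have hω := hray ω (by simp)
  rw [integral_norm_smul, smul_eq_mul] at hω
  exact nonpos_of_mul_nonpos_right hω hsphere

end Integral

variable {ω : E}

lemma integrable_comp_norm_smul {h : E → ℝ} (hh : Continuous h) (hc : HasCompactSupport h)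
    (hω : ‖ω‖ = 1) : Integrable (fun x ↦ h (‖x‖ • ω)) μ := by
  obtain ⟨R, hR⟩ := hc.isCompact.isBounded.subset_closedBall 0
  have hray : Continuous fun x : E ↦ h (‖x‖ • ω) := hh.comp (by fun_prop)
  refine hray.integrable_of_hasCompactSupport
    (HasCompactSupport.intro (isCompact_closedBall (0 : E) R) fun x hx ↦ ?_)
  refine image_eq_zero_of_notMem_tsupport (f := h) fun hmem ↦ hx ?_
  simpa [norm_smul, hω] using hR hmem

variable {p : ℝ} {u : E → ℝ}

lemma integrable_norm_fderiv_comp_norm_smul (hp : 0 < p) (hu : ContDiff ℝ 1 u)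
    (hc : HasCompactSupport u) (hω : ‖ω‖ = 1) :
    Integrable (fun x ↦ ‖fderiv ℝ u (‖x‖ • ω)‖ ^ p) μ :=
  integrable_comp_norm_smul
    ((hu.continuous_fderiv one_ne_zero).norm.rpow_const fun _ ↦ .inr hp.le)
    ((hc.fderiv ℝ).comp_left (g := fun l ↦ ‖l‖ ^ p) (by simp [hp.ne'])) hω

lemma dirichletEnergy_abs_comp_norm_smul_le (hp : 0 < p) (hu : ContDiff ℝ 1 u)
    (hc : HasCompactSupport u) (hω : ‖ω‖ = 1) :
    dirichletEnergy μ p (fun x ↦ |u (‖x‖ • ω)|) ≤ ∫ x, ‖fderiv ℝ u (‖x‖ • ω)‖ ^ p ∂μ := by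
  refine integral_mono_of_nonneg (ae_of_all _ fun _ ↦ by positivity)
    (integrable_norm_fderiv_comp_norm_smul hp hu hc hω) ?_
  filter_upwards [ae_differentiableAt_norm (μ := μ)] with x hx
  have hray : HasFDerivAt (fun y : E ↦ ‖y‖ • ω) ((fderiv ℝ (‖·‖) x).smulRight ω) x :=
    hx.hasFDerivAt.smul_const ω
  have hcomp := ((hu.differentiable one_ne_zero) (‖x‖ • ω)).hasFDerivAt.comp x hray
  gcongr
  calc ‖fderiv ℝ (fun y ↦ |u (‖y‖ • ω)|) x‖
      ≤ ‖fderiv ℝ (fun y ↦ u (‖y‖ • ω)) x‖ := norm_fderiv_abs_le hcomp.differentiableAt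
    _ = ‖(fderiv ℝ u (‖x‖ • ω)).comp ((fderiv ℝ (‖·‖) x).smulRight ω)‖ :=
        congrArg norm hcomp.fderiv
    _ ≤ ‖fderiv ℝ u (‖x‖ • ω)‖ * ‖(fderiv ℝ (‖·‖) x).smulRight ω‖ :=
        ContinuousLinearMap.opNorm_comp_le _ _
    _ ≤ ‖fderiv ℝ u (‖x‖ • ω)‖ := by
        refine mul_le_of_le_one_right (norm_nonneg _) ?_
        rw [ContinuousLinearMap.norm_smulRight_apply, hω, mul_one]
        simpa using norm_fderiv_le_of_lipschitz ℝ (x₀ := x) (lipschitzWith_one_norm (E := E))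

lemma exists_isAnnularProfile_dirichletEnergy_lt [Nontrivial E] {a b l : ℝ} (hp : 0 < p)
    (ha : 0 ≤ a) (hu : ContDiff ℝ 1 u) (hc : HasCompactSupport u)
    (hs : tsupport u ⊆ ball 0 b \ closedBall 0 a)
    (hl : dirichletEnergy μ p u < l * lpMass μ p u) :
    ∃ f, IsAnnularProfile a b f ∧
      dirichletEnergy μ p (fun x ↦ f ‖x‖) < l * lpMass μ p (fun x ↦ f ‖x‖) := by
  obtain ⟨K, hK⟩ := hu.lipschitzWith_of_hasCompactSupport hc one_ne_zero
  have hmass := (integrable_abs_rpow (μ := μ) hp hu.continuous hc).const_mul l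
  have hpos : 0 < ∫ x, (l * |u x| ^ p - ‖fderiv ℝ u x‖ ^ p) ∂μ := by
    rw [integral_sub hmass (integrable_norm_fderiv_rpow hp hK (hc.fderiv ℝ)), integral_const_mul]
    exact sub_pos.2 hl
  obtain ⟨ω, hω, hray⟩ := exists_integral_norm_smul_pos hpos
  refine ⟨_, isAnnularProfile_abs_smul ha hu hc hs hω, ?_⟩
  have hmassω : Integrable (fun x ↦ |u (‖x‖ • ω)| ^ p) μ :=
    integrable_comp_norm_smul (hu.continuous.abs.rpow_const fun _ ↦ .inr hp.le)
      (hc.comp_left (g := fun t ↦ |t| ^ p) (by simp [hp.ne'])) hω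
  rw [integral_sub (hmassω.const_mul l) (integrable_norm_fderiv_comp_norm_smul hp hu hc hω),
    integral_const_mul, sub_pos] at hray
  simp only [max_eq_left (norm_nonneg _)]
  refine (dirichletEnergy_abs_comp_norm_smul_le hp hu hc hω).trans_lt (hray.trans_eq ?_)
  simp only [lpMass, abs_abs]

end Ray

section Eccentric

variable {E : Type*} [NormedAddCommGroup E]

/-- The radial function `f ∘ ‖·‖` with its part inside radius `c` recentred at `z₁` and its part
outside radius `c` recentred at `z₂`. When `f` is maximal at `c`, each part equals `f c` on the
other side of its sphere, so that the minimum patches them; for `z₁ = z₂ = 0` it is `f ∘ ‖·‖`. -/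
def eccentricGlue (f : ℝ → ℝ) (c : ℝ) (z₁ z₂ x : E) : ℝ :=
  min (f (min ‖x - z₁‖ c)) (f (max ‖x - z₂‖ c))

variable {f : ℝ → ℝ} {a b c p : ℝ} {K : NNReal}

lemma lipschitzWith_comp_min_norm (hf : LipschitzWith K f) (c : ℝ) :
    LipschitzWith K fun x : E ↦ f (min ‖x‖ c) := by
  simpa [Function.comp_def] using hf.comp (lipschitzWith_one_norm.min_const c)

lemma lipschitzWith_comp_max_norm (hf : LipschitzWith K f) (c : ℝ) :
    LipschitzWith K fun x : E ↦ f (max ‖x‖ c) := by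
  simpa [Function.comp_def] using hf.comp (lipschitzWith_one_norm.max_const c)

lemma lipschitzWith_comp_sub {F : Type*} [PseudoEMetricSpace F] {u : E → F}
    (hu : LipschitzWith K u) (z : E) : LipschitzWith K fun x ↦ u (x - z) := by
  simpa [Function.comp_def] using hu.comp (IsometryEquiv.subRight z).isometry.lipschitz

lemma lipschitzWith_eccentricGlue (hf : LipschitzWith K f) (c : ℝ) (z₁ z₂ : E) :
    LipschitzWith K (eccentricGlue f c z₁ z₂) := by
  rw [← max_self K]
  exact (lipschitzWith_comp_sub (lipschitzWith_comp_min_norm hf c) z₁).min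
    (lipschitzWith_comp_sub (lipschitzWith_comp_max_norm hf c) z₂)

lemma eccentricGlue_eq_of_mem (f : ℝ → ℝ) {z₁ z₂ x : E} (hx : x ∈ closedBall z₂ c \ ball z₁ c) :
    eccentricGlue f c z₁ z₂ x = f c := by
  have h₁ : c ≤ ‖x - z₁‖ := by simpa [dist_eq_norm] using hx.2
  have h₂ : ‖x - z₂‖ ≤ c := by simpa [dist_eq_norm] using hx.1
  simp [eccentricGlue, h₁, h₂]

section Gradient

variable [NormedSpace ℝ E] {x : E}

lemma hasCompactSupport_fderiv_comp_sub {u : E → ℝ} (hc : HasCompactSupport (fderiv ℝ u)) (z : E) :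
    HasCompactSupport (fderiv ℝ fun x ↦ u (x - z)) := by
  have hcomp : fderiv ℝ (fun x ↦ u (x - z)) = fderiv ℝ u ∘ Homeomorph.subRight z :=
    funext fun _ ↦ fderiv_comp_sub z
  exact hcomp ▸ hc.comp_homeomorph (Homeomorph.subRight z)

lemma fderiv_comp_min_norm_eq_zero (hmax : ∀ r, f r ≤ f c) (hx : c ≤ ‖x‖) :
    fderiv ℝ (fun y : E ↦ f (min ‖y‖ c)) x = 0 := by
  have hloc : IsLocalMax (fun y : E ↦ f (min ‖y‖ c)) x :=
    Eventually.of_forall fun y ↦ by simpa [min_eq_right hx] using hmax _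
  exact hloc.fderiv_eq_zero

lemma fderiv_comp_max_norm_eq_zero (hmax : ∀ r, f r ≤ f c) (hx : ‖x‖ ≤ c) :
    fderiv ℝ (fun y : E ↦ f (max ‖y‖ c)) x = 0 := by
  have hloc : IsLocalMax (fun y : E ↦ f (max ‖y‖ c)) x :=
    Eventually.of_forall fun y ↦ by simpa [max_eq_right hx] using hmax _
  exact hloc.fderiv_eq_zero

lemma hasCompactSupport_fderiv_comp_min_norm [ProperSpace E] (hmax : ∀ r, f r ≤ f c) :
    HasCompactSupport (fderiv ℝ fun y : E ↦ f (min ‖y‖ c)) :=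
  HasCompactSupport.intro (isCompact_closedBall (0 : E) c) fun x hx ↦
    fderiv_comp_min_norm_eq_zero hmax (by simpa using hx : c < ‖x‖).le

end Gradient

namespace IsAnnularProfile

lemma hasCompactSupport_comp_max_norm [ProperSpace E] (hf : IsAnnularProfile a b f) (c : ℝ) :
    HasCompactSupport fun x : E ↦ f (max ‖x‖ c) :=
  HasCompactSupport.intro (isCompact_closedBall (0 : E) b) fun _ hx ↦
    image_eq_zero_of_notMem_tsupport (f := f) fun h ↦
      hx (mem_closedBall_zero_iff.2 ((le_max_left _ c).trans (hf.tsupport_subset h).2.le))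

lemma tsupport_eccentricGlue_subset (hf : IsAnnularProfile a b f) (c : ℝ) (z₁ z₂ : E) :
    tsupport (eccentricGlue f c z₁ z₂) ⊆ ball z₂ b \ closedBall z₁ a := by
  have hsub : tsupport (eccentricGlue f c z₁ z₂) ⊆
      (fun x ↦ min ‖x - z₁‖ c) ⁻¹' tsupport f ∩ (fun x ↦ max ‖x - z₂‖ c) ⁻¹' tsupport f := by
    refine closure_minimal (fun x hx ↦ ⟨subset_tsupport f fun h ↦ hx ?_,
      subset_tsupport f fun h ↦ hx ?_⟩) <|
      ((isClosed_tsupport f).preimage (by fun_prop)).inter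
        ((isClosed_tsupport f).preimage (by fun_prop))
    · simp [eccentricGlue, h, hf.nonneg]
    · simp [eccentricGlue, h, hf.nonneg]
  intro x hx
  obtain ⟨h₁, h₂⟩ := hsub hx
  refine ⟨mem_ball_iff_norm.2 ((le_max_left _ c).trans_lt (hf.tsupport_subset h₂).2), fun h ↦ ?_⟩
  exact ((hf.tsupport_subset h₁).1.trans_le (min_le_left _ c)).not_ge (mem_closedBall_iff_norm.1 h)

lemma hasCompactSupport_eccentricGlue [ProperSpace E] (hf : IsAnnularProfile a b f) (c : ℝ)
    (z₁ z₂ : E) : HasCompactSupport (eccentricGlue f c z₁ z₂) :=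
  (isCompact_closedBall z₂ b).of_isClosed_subset (isClosed_tsupport _) <|
    (hf.tsupport_eccentricGlue_subset c z₁ z₂).trans (sdiff_subset.trans ball_subset_closedBall)

section Measure

variable [NormedSpace ℝ E] [FiniteDimensional ℝ E] [MeasurableSpace E] [BorelSpace E]
  {μ : Measure E} [μ.IsAddHaarMeasure]

lemma dirichletEnergy_eccentricGlue_le (hf : IsAnnularProfile a b f) (hmax : ∀ r, f r ≤ f c)
    (hp : 0 < p) (z₁ z₂ : E) :
    dirichletEnergy μ p (eccentricGlue f c z₁ z₂) ≤ dirichletEnergy μ p (fun x ↦ f ‖x‖) := by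
  obtain ⟨K, hK⟩ := hf.exists_lipschitzWith
  have hin := lipschitzWith_comp_min_norm (E := E) hK c
  have hout := lipschitzWith_comp_max_norm (E := E) hK c
  have hinc := hasCompactSupport_fderiv_comp_min_norm (E := E) hmax
  have houtc := (hf.hasCompactSupport_comp_max_norm (E := E) c).fderiv ℝ
  have hdisj (x : E) : fderiv ℝ (fun y : E ↦ f (min ‖y‖ c)) x = 0 ∨
      fderiv ℝ (fun y : E ↦ f (max ‖y‖ c)) x = 0 :=
    (le_total c ‖x‖).imp (fderiv_comp_min_norm_eq_zero hmax) (fderiv_comp_max_norm_eq_zero hmax)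
  have hsplit (x : E) : f (min ‖x‖ c) + f (max ‖x‖ c) = f ‖x‖ + f c := by
    rcases le_total ‖x‖ c with h | h <;> simp [h, add_comm]
  calc dirichletEnergy μ p (eccentricGlue f c z₁ z₂)
      ≤ dirichletEnergy μ p (fun x ↦ f (min ‖x - z₁‖ c)) +
          dirichletEnergy μ p (fun x ↦ f (max ‖x - z₂‖ c)) :=
        dirichletEnergy_min_le hp (lipschitzWith_comp_sub hin z₁) (lipschitzWith_comp_sub hout z₂)
          (hasCompactSupport_fderiv_comp_sub hinc z₁) (hasCompactSupport_fderiv_comp_sub houtc z₂)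
    _ = dirichletEnergy μ p (fun x ↦ f (min ‖x‖ c)) +
          dirichletEnergy μ p (fun x ↦ f (max ‖x‖ c)) := by
        rw [dirichletEnergy_comp_sub p (fun x ↦ f (min ‖x‖ c)),
          dirichletEnergy_comp_sub p (fun x ↦ f (max ‖x‖ c))]
    _ = dirichletEnergy μ p (fun x ↦ f ‖x‖ + f c) := by
        rw [← dirichletEnergy_add hp hin hout hinc houtc hdisj]
        simp only [hsplit]
    _ = dirichletEnergy μ p (fun x ↦ f ‖x‖) := by
        simp only [dirichletEnergy, fderiv_add_const]

lemma lpMass_comp_norm_le_lpMass_eccentricGlue (hf : IsAnnularProfile a b f)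
    (hmax : ∀ r, f r ≤ f c) (hp : 0 < p) (z₁ z₂ : E) :
    lpMass μ p (fun x ↦ f ‖x‖) ≤ lpMass μ p (eccentricGlue f c z₁ z₂) := by
  obtain ⟨K, hK⟩ := hf.exists_lipschitzWith
  have hfc : Continuous fun r ↦ |f r| ^ p := hK.continuous.abs.rpow_const fun _ ↦ .inr hp.le
  have hle (r : ℝ) : |f r| ^ p ≤ |f c| ^ p := by
    rw [abs_of_nonneg (hf.nonneg r), abs_of_nonneg (hf.nonneg c)]
    exact Real.rpow_le_rpow (hf.nonneg r) (hmax r) hp.le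
  have hin : Integrable (fun x : E ↦ |f (min ‖x‖ c)| ^ p - |f c| ^ p) μ := by
    refine Continuous.integrable_of_hasCompactSupport ?_ <|
      HasCompactSupport.intro (isCompact_closedBall (0 : E) c) fun x hx ↦ ?_
    · exact (hfc.comp (continuous_norm.min continuous_const)).sub continuous_const
    · rw [min_eq_right (by simpa using hx : c < ‖x‖).le, sub_self]
  have hout : Integrable (fun x : E ↦ |f (max ‖x‖ c)| ^ p) μ :=
    integrable_abs_rpow hp (lipschitzWith_comp_max_norm hK c).continuous
      (hf.hasCompactSupport_comp_max_norm c)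
  calc lpMass μ p (fun x ↦ f ‖x‖)
      = ∫ x, (|f (min ‖x‖ c)| ^ p - |f c| ^ p + |f (max ‖x‖ c)| ^ p) ∂μ := by
        refine integral_congr_ae (ae_of_all _ fun x ↦ ?_)
        rcases le_total ‖x‖ c with h | h <;> simp [h]
    _ = ∫ x, (|f (min ‖x - z₁‖ c)| ^ p - |f c| ^ p + |f (max ‖x - z₂‖ c)| ^ p) ∂μ := by
        rw [integral_add hin hout, integral_add (hin.comp_sub_right z₁) (hout.comp_sub_right z₂),
          integral_sub_right_eq_self (fun x ↦ |f (min ‖x‖ c)| ^ p - |f c| ^ p),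
          integral_sub_right_eq_self (fun x ↦ |f (max ‖x‖ c)| ^ p)]
    _ ≤ lpMass μ p (eccentricGlue f c z₁ z₂) := by
        refine integral_mono ((hin.comp_sub_right z₁).add (hout.comp_sub_right z₂))
          (integrable_abs_rpow hp (lipschitzWith_eccentricGlue hK c z₁ z₂).continuous
            (hf.hasCompactSupport_eccentricGlue c z₁ z₂)) fun x ↦ ?_
        simp only [eccentricGlue]
        rcases min_choice (f (min ‖x - z₁‖ c)) (f (max ‖x - z₂‖ c)) with h | h <;> rw [h]
        · linarith [hle (max ‖x - z₂‖ c)]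
        · linarith [hle (min ‖x - z₁‖ c)]

end Measure

end IsAnnularProfile

end Eccentric

lemma exists_closedBall_subset_closedBall_sdiff_ball {E : Type*} [NormedAddCommGroup E]
    [NormedSpace ℝ E] {z₁ z₂ : E} {c ρ : ℝ} (hρ : 0 < ρ) (hz : 2 * ρ ≤ ‖z₂ - z₁‖) (hc : ρ ≤ c) :
    ∃ x₀, closedBall x₀ ρ ⊆ closedBall z₂ c \ ball z₁ c := by
  set t := ‖z₂ - z₁‖
  have ht : 0 < t := by linarith
  have hnear : ‖((c - ρ) / t) • (z₂ - z₁)‖ = c - ρ := by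
    rw [norm_smul, Real.norm_of_nonneg (div_nonneg (by linarith) ht.le), div_mul_cancel₀ _ ht.ne']
  have hfar : ‖((c - ρ) / t + 1) • (z₂ - z₁)‖ = c - ρ + t := by
    rw [norm_smul, Real.norm_of_nonneg (by have := div_nonneg (sub_nonneg.2 hc) ht.le; linarith),
      add_mul, div_mul_cancel₀ _ ht.ne', one_mul]
  refine ⟨z₂ + ((c - ρ) / t) • (z₂ - z₁), subset_sdiff.2 ⟨closedBall_subset_closedBall' ?_, ?_⟩⟩
  · rw [dist_eq_norm, add_sub_cancel_left, hnear, add_sub_cancel]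
  · refine closedBall_disjoint_ball ?_
    rw [dist_eq_norm, show z₂ + ((c - ρ) / t) • (z₂ - z₁) - z₁ = ((c - ρ) / t + 1) • (z₂ - z₁) by
      rw [add_smul, one_smul]; abel, hfar]
    linarith

lemma lpMass_add_le_lpMass_add_const_mul {X : Type*} [TopologicalSpace X] [MeasurableSpace X]
    [OpensMeasurableSpace X] {μ : Measure X} [IsFiniteMeasureOnCompacts μ] {p M η : ℝ} {u φ : X → ℝ}
    (hp : 1 ≤ p) (hu : Continuous u) (huc : HasCompactSupport u)
    (hφ : Continuous φ) (hφc : HasCompactSupport φ) (hφ0 : ∀ x, 0 ≤ φ x) (hM0 : 0 ≤ M)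
    (hM : ∀ x ∈ tsupport φ, u x = M) (hη : 0 ≤ η) :
    lpMass μ p u + M ^ p * (p * η * ∫ x, φ x ∂μ) ≤ lpMass μ p (fun x ↦ u x + η * M * φ x) := by
  have hp0 : 0 < p := by linarith
  have hint := integrable_abs_rpow (μ := μ) hp0 hu huc
  have hφint := (hφ.integrable_of_hasCompactSupport hφc (μ := μ)).const_mul (M ^ p * (p * η))
  rw [← mul_assoc, ← integral_const_mul, lpMass, ← integral_add hint hφint]
  refine integral_mono (hint.add hφint)
    (integrable_abs_rpow hp0 (by fun_prop) (huc.add hφc.mul_left)) fun x ↦ ?_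
  by_cases hx : x ∈ tsupport φ
  · have hηφ : 0 ≤ η * φ x := mul_nonneg hη (hφ0 x)
    calc |u x| ^ p + M ^ p * (p * η) * φ x = M ^ p * (1 + p * (η * φ x)) := by
          rw [hM x hx, abs_of_nonneg hM0]; ring
      _ ≤ M ^ p * (1 + η * φ x) ^ p := by
          gcongr
          exact one_add_mul_self_le_rpow_one_add (by linarith) hp
      _ = |u x + η * M * φ x| ^ p := by
          rw [← Real.mul_rpow hM0 (by linarith), hM x hx,
            show M + η * M * φ x = M * (1 + η * φ x) by ring, abs_of_nonneg (by positivity)]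
  · simp [image_eq_zero_of_notMem_tsupport hx]

lemma dirichletEnergy_add_const_mul_of_le {E : Type*} [NormedAddCommGroup E] [NormedSpace ℝ E]
    [FiniteDimensional ℝ E] [MeasurableSpace E] [BorelSpace E] {μ : Measure E} [μ.IsAddHaarMeasure]
    {p M : ℝ} {u φ : E → ℝ} {K L : NNReal} (hp : 0 < p) (hu : LipschitzWith K u)
    (huc : HasCompactSupport u) (hφ : LipschitzWith L φ) (hφc : HasCompactSupport φ)
    (hle : ∀ x, u x ≤ M) (hM : ∀ x ∈ tsupport φ, u x = M) (t : ℝ) :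
    dirichletEnergy μ p (fun x ↦ u x + t * φ x) =
      dirichletEnergy μ p u + |t| ^ p * dirichletEnergy μ p φ := by
  have htφ (x : E) : fderiv ℝ (fun y ↦ t * φ y) x = t • fderiv ℝ φ x :=
    congrFun (fderiv_const_smul_field t) x
  have hdisj (x : E) : fderiv ℝ u x = 0 ∨ fderiv ℝ (fun y ↦ t * φ y) x = 0 := by
    by_cases hx : x ∈ tsupport φ
    · have hmax : IsLocalMax u x := Eventually.of_forall fun y ↦ (hle y).trans_eq (hM x hx).symm
      exact .inl hmax.fderiv_eq_zero
    · rw [htφ, image_eq_zero_of_notMem_tsupport fun h ↦ hx (tsupport_fderiv_subset ℝ h), smul_zero]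
      exact .inr rfl
  have hlip : LipschitzWith (‖t‖₊ * L) fun x ↦ t * φ x := (lipschitzWith_smul t).comp hφ
  rw [dirichletEnergy_add hp hu hlip (huc.fderiv ℝ) (hφc.mul_left.fderiv ℝ) hdisj]
  simp only [dirichletEnergy, htφ, norm_smul, Real.norm_eq_abs, ← integral_const_mul,
    Real.mul_rpow (abs_nonneg t) (norm_nonneg _)]

namespace IsAnnularProfile

variable {a b c p : ℝ} {f : ℝ → ℝ}

lemma hasCompactSupport (hf : IsAnnularProfile a b f) : HasCompactSupport f :=
  isCompact_Icc.of_isClosed_subset (isClosed_tsupport f)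
    (hf.tsupport_subset.trans Ioo_subset_Icc_self)

lemma exists_forall_le (hf : IsAnnularProfile a b f) : ∃ c, ∀ r, f r ≤ f c := by
  obtain ⟨K, hK⟩ := hf.exists_lipschitzWith
  obtain ⟨c, hc⟩ :=
    (hK.continuous.neg).exists_forall_le_of_hasCompactSupport hf.hasCompactSupport.neg
  exact ⟨c, fun r ↦ neg_le_neg_iff.1 (hc r)⟩

lemma lpMass_comp_norm_le {E : Type*} [NormedAddCommGroup E] [ProperSpace E] [MeasurableSpace E]
    {μ : Measure E} [IsFiniteMeasureOnCompacts μ] (hf : IsAnnularProfile a b f)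
    (hmax : ∀ r, f r ≤ f c) (hp : 0 < p) :
    lpMass μ p (fun x ↦ f ‖x‖) ≤ f c ^ p * μ.real (closedBall 0 b) := by
  have hzero (x : E) (hx : x ∉ closedBall 0 b) : |f ‖x‖| ^ p = 0 := by
    rw [image_eq_zero_of_notMem_tsupport (f := f) fun h ↦
      hx (mem_closedBall_zero_iff.2 (hf.tsupport_subset h).2.le), abs_zero, Real.zero_rpow hp.ne']
  rw [lpMass, ← setIntegral_eq_integral_of_forall_compl_eq_zero hzero]
  refine (Real.le_norm_self _).trans <|
    norm_setIntegral_le_of_norm_le_const measure_closedBall_lt_top fun x _ ↦ ?_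
  rw [Real.norm_of_nonneg (by positivity), abs_of_nonneg (hf.nonneg _)]
  exact Real.rpow_le_rpow (hf.nonneg _) (hmax _) hp.le

lemma mem_Ioo_of_ne_zero (hf : IsAnnularProfile a b f) (hc : f c ≠ 0) : c ∈ Ioo a b :=
  hf.tsupport_subset (subset_tsupport f hc)

lemma pos_of_dirichletEnergy_lt {E : Type*} [NormedAddCommGroup E] [NormedSpace ℝ E] [ProperSpace E]
    [MeasurableSpace E] {μ : Measure E} [IsFiniteMeasureOnCompacts μ] {l : ℝ}
    (hf : IsAnnularProfile a b f) (hmax : ∀ r, f r ≤ f c) (hp : 0 < p)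
    (hl : dirichletEnergy μ p (fun x ↦ f ‖x‖) < l * lpMass μ p (fun x ↦ f ‖x‖)) : 0 < f c := by
  refine (hf.nonneg c).lt_of_ne' fun hc ↦ hl.not_ge ?_
  have hmass : lpMass μ p (fun x ↦ f ‖x‖) ≤ 0 := by
    simpa [hc, hp.ne'] using hf.lpMass_comp_norm_le (μ := μ) hmax hp
  rw [hmass.antisymm (lpMass_nonneg _ _ _), mul_zero]
  exact dirichletEnergy_nonneg _ _ _

end IsAnnularProfile

lemma ball_sdiff_closedBall_nonempty {E : Type*} [NormedAddCommGroup E] [NormedSpace ℝ E]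
    [Nontrivial E] {a b : ℝ} (z₁ z₂ : E) (ha : 0 ≤ a) (hab : a < b) :
    (ball z₂ b \ closedBall z₁ a).Nonempty := by
  by_contra! hempty
  have hsub : ball z₂ b ⊆ closedBall z₁ a := sdiff_eq_empty.1 hempty
  have hdiam := diam_mono hsub isBounded_closedBall
  rw [diam_ball_eq z₂ (ha.trans hab.le), diam_closedBall_eq z₁ ha] at hdiam
  linarith

lemma exists_pos_rpow_mul_lt {p A : ℝ} (hp : 1 < p) (hA : 0 < A) (D : ℝ) :
    ∃ η > 0, η ^ p * D < η * A := by
  have hlim : Tendsto (fun η : ℝ ↦ η ^ (p - 1) * D) (𝓝[>] 0) (𝓝 (0 ^ (p - 1) * D)) :=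
    ((Real.continuousAt_rpow_const 0 (p - 1) (.inr (by linarith))).mul_const D).mono_left
      nhdsWithin_le_nhds
  rw [Real.zero_rpow (by linarith), zero_mul] at hlim
  obtain ⟨η, hη, hη0⟩ := ((hlim.eventually_lt_const hA).and self_mem_nhdsWithin).exists
  refine ⟨η, hη0, ?_⟩
  have hmul := mul_lt_mul_of_pos_left hη hη0
  rwa [← mul_assoc, ← Real.rpow_one_add' (mem_Ioi.1 hη0).le (by linarith),
    add_sub_cancel] at hmul

section EccentricAnnulus

variable {N : ℕ} {p a b : ℝ} {z₁ z₂ : EuclideanSpace ℝ (Fin N)}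

lemma lam1_mul_lpMass_add_le_of_plateau {Ω : Set (EuclideanSpace ℝ (Fin N))} {M η : ℝ}
    {u φ : EuclideanSpace ℝ (Fin N) → ℝ} {K L : NNReal} (hp : 1 ≤ p) (hΩ : IsOpen Ω)
    (hu : LipschitzWith K u) (huc : HasCompactSupport u) (hus : tsupport u ⊆ Ω)
    (hφ : LipschitzWith L φ) (hφc : HasCompactSupport φ) (hφs : tsupport φ ⊆ Ω)
    (hφ0 : ∀ x, 0 ≤ φ x) (hM0 : 0 ≤ M) (hle : ∀ x, u x ≤ M) (hM : ∀ x ∈ tsupport φ, u x = M)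
    (hη : 0 ≤ η) :
    lam1 p Ω * (lpMass volume p u + M ^ p * (p * η * ∫ x, φ x)) ≤
      dirichletEnergy volume p u + M ^ p * (η ^ p * dirichletEnergy volume p φ) := by
  have hp0 : 0 < p := by linarith
  calc lam1 p Ω * (lpMass volume p u + M ^ p * (p * η * ∫ x, φ x))
      ≤ lam1 p Ω * lpMass volume p (fun x ↦ u x + η * M * φ x) :=
        mul_le_mul_of_nonneg_left (lpMass_add_le_lpMass_add_const_mul hp hu.continuous huc
          hφ.continuous hφc hφ0 hM0 hM hη) (lam1_nonneg _ _)
    _ ≤ dirichletEnergy volume p (fun x ↦ u x + η * M * φ x) :=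
        lam1_mul_lpMass_le hp0 hΩ (hu.add ((lipschitzWith_smul (η * M)).comp hφ))
          (huc.add hφc.mul_left)
          ((tsupport_add _ _).trans (union_subset hus (tsupport_mul_subset_right.trans hφs)))
    _ = dirichletEnergy volume p u + M ^ p * (η ^ p * dirichletEnergy volume p φ) := by
        rw [dirichletEnergy_add_const_mul_of_le hp0 hu huc hφ hφc hle hM,
          abs_of_nonneg (mul_nonneg hη hM0), Real.mul_rpow hη hM0]
        ring

lemma IsAnnularProfile.lam1_mul_lpMass_add_le {f : ℝ → ℝ} {c ρ η : ℝ} {K : NNReal}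
    {φ : EuclideanSpace ℝ (Fin N) → ℝ} (hf : IsAnnularProfile a b f) (hmax : ∀ r, f r ≤ f c)
    (hp : 1 ≤ p) (hc : c ∈ Ioo a b) (hρ : 0 < ρ) (hρc : ρ ≤ c) (hz : 2 * ρ ≤ ‖z₂ - z₁‖)
    (hφ : LipschitzWith K φ) (hφ0 : ∀ x, 0 ≤ φ x) (hφs : tsupport φ ⊆ closedBall 0 ρ)
    (hη : 0 ≤ η) :
    lam1 p (ball z₂ b \ closedBall z₁ a) *
        (lpMass volume p (fun x : EuclideanSpace ℝ (Fin N) ↦ f ‖x‖) +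
          f c ^ p * (p * η * ∫ x, φ x)) ≤
      dirichletEnergy volume p (fun x : EuclideanSpace ℝ (Fin N) ↦ f ‖x‖) +
        f c ^ p * (η ^ p * dirichletEnergy volume p φ) := by
  have hp0 : 0 < p := by linarith
  obtain ⟨L, hL⟩ := hf.exists_lipschitzWith
  obtain ⟨x₀, hx₀⟩ := exists_closedBall_subset_closedBall_sdiff_ball hρ hz hρc
  have hψs : tsupport (fun x ↦ φ (x - x₀)) ⊆ closedBall x₀ ρ :=
    closure_minimal (fun x hx ↦ by simpa [dist_eq_norm] using hφs (subset_tsupport φ hx))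
      isClosed_closedBall
  have hsub : closedBall x₀ ρ ⊆ ball z₂ b \ closedBall z₁ a :=
    hx₀.trans (sdiff_subset_sdiff (closedBall_subset_ball hc.2) (closedBall_subset_ball hc.1))
  have hplateau := lam1_mul_lpMass_add_le_of_plateau hp (isOpen_ball.sdiff isClosed_closedBall)
    (lipschitzWith_eccentricGlue hL c z₁ z₂) (hf.hasCompactSupport_eccentricGlue c z₁ z₂)
    (hf.tsupport_eccentricGlue_subset c z₁ z₂) (lipschitzWith_comp_sub hφ x₀)
    ((isCompact_closedBall x₀ ρ).of_isClosed_subset (isClosed_tsupport _) hψs) (hψs.trans hsub)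
    (fun _ ↦ hφ0 _) (hf.nonneg c) (fun _ ↦ (min_le_left _ _).trans (hmax _))
    (fun _ hx ↦ eccentricGlue_eq_of_mem f (hx₀ (hψs hx))) hη
  rw [integral_sub_right_eq_self φ x₀, dirichletEnergy_comp_sub] at hplateau
  have hmass := hf.lpMass_comp_norm_le_lpMass_eccentricGlue (μ := volume) hmax hp0 z₁ z₂
  have henergy := hf.dirichletEnergy_eccentricGlue_le (μ := volume) hmax hp0 z₁ z₂
  exact (mul_le_mul_of_nonneg_left (by gcongr) (lam1_nonneg _ _)).trans
    (hplateau.trans (by gcongr))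

lemma exists_isAnnularProfile_of_lam1_lt [NeZero N] {l : ℝ} (hp : 0 < p) (ha : 0 ≤ a)
    (hab : a < b) (hl : lam1 p (ball (0 : EuclideanSpace ℝ (Fin N)) b \ closedBall 0 a) < l) :
    ∃ f, IsAnnularProfile a b f ∧
      dirichletEnergy volume p (fun x : EuclideanSpace ℝ (Fin N) ↦ f ‖x‖) <
        l * lpMass volume p (fun x : EuclideanSpace ℝ (Fin N) ↦ f ‖x‖) := by
  contrapose! hl
  refine le_lam1 hp (isOpen_ball.sdiff isClosed_closedBall)
    (ball_sdiff_closedBall_nonempty 0 0 ha hab) fun u hu hc hs ↦ ?_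
  by_contra! hlt
  obtain ⟨f, hf, hfl⟩ :=
    exists_isAnnularProfile_dirichletEnergy_lt hp ha (hu.of_le (by simp)) hc hs hlt
  exact (hl f hf).not_gt hfl

lemma lam1_mul_integral_le_of_lam1_le [NeZero N] {ρ η : ℝ} {K : NNReal}
    {φ : EuclideanSpace ℝ (Fin N) → ℝ} (hp : 1 ≤ p) (hab : a < b) (hρ : 0 < ρ) (hρa : ρ ≤ a)
    (hz : 2 * ρ ≤ ‖z₂ - z₁‖) (hφ : LipschitzWith K φ) (hφ0 : ∀ x, 0 ≤ φ x)
    (hφs : tsupport φ ⊆ closedBall 0 ρ) (hη : 0 ≤ η)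
    (hle : lam1 p (ball (0 : EuclideanSpace ℝ (Fin N)) b \ closedBall 0 a) ≤
      lam1 p (ball z₂ b \ closedBall z₁ a)) :
    lam1 p (ball z₂ b \ closedBall z₁ a) * (p * η * ∫ x, φ x) ≤
      η ^ p * dirichletEnergy volume p φ := by
  have hp0 : 0 < p := by linarith
  have ha : 0 < a := hρ.trans_le hρa
  set L := lam1 p (ball z₂ b \ closedBall z₁ a)
  set W := volume.real (closedBall (0 : EuclideanSpace ℝ (Fin N)) b)
  have hW : 0 < W :=
    ENNReal.toReal_pos (measure_closedBall_pos volume 0 (ha.trans hab)).ne'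
      measure_closedBall_lt_top.ne
  refine le_of_forall_pos_le_add fun ε hε ↦ ?_
  obtain ⟨f, hf, hfl⟩ := exists_isAnnularProfile_of_lam1_lt (l := L + ε / W) hp0 ha.le hab
    (hle.trans_lt (lt_add_of_pos_right L (by positivity)))
  obtain ⟨c, hmax⟩ := hf.exists_forall_le
  have hfc : 0 < f c := hf.pos_of_dirichletEnergy_lt hmax hp0 hfl
  have hc : c ∈ Ioo a b := hf.mem_Ioo_of_ne_zero hfc.ne'
  have hglue := hf.lam1_mul_lpMass_add_le hmax hp hc hρ (hρa.trans hc.1.le) hz hφ hφ0 hφs hη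
  have hmass : ε / W * lpMass volume p (fun x : EuclideanSpace ℝ (Fin N) ↦ f ‖x‖) ≤ f c ^ p * ε :=
    calc _ ≤ ε / W * (f c ^ p * W) := by
          gcongr
          exact hf.lpMass_comp_norm_le hmax hp0
      _ = f c ^ p * ε := by field_simp
  refine le_of_mul_le_mul_left ?_ (Real.rpow_pos_of_pos hfc p)
  linarith

theorem lam1_eccentric_annulus_lt [NeZero N] (hp : 1 < p) (ha : 0 < a) (hab : a < b)
    (hz : z₁ ≠ z₂) :
    lam1 p (ball z₂ b \ closedBall z₁ a) <
      lam1 p (ball (0 : EuclideanSpace ℝ (Fin N)) b \ closedBall 0 a) := by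
  have hL : 0 < lam1 p (ball z₂ b \ closedBall z₁ a) :=
    lam1_pos hp.le (isOpen_ball.sdiff isClosed_closedBall)
      (ball_sdiff_closedBall_nonempty z₁ z₂ ha.le hab) (isBounded_ball.subset sdiff_subset)
  obtain ⟨ρ, hρ, hρa, hρz⟩ : ∃ ρ, 0 < ρ ∧ ρ ≤ a ∧ 2 * ρ ≤ ‖z₂ - z₁‖ := by
    have hpos : 0 < ‖z₂ - z₁‖ := norm_sub_pos_iff.2 hz.symm
    exact ⟨min a (‖z₂ - z₁‖ / 2), by positivity, min_le_left _ _,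
      by linarith [min_le_right a (‖z₂ - z₁‖ / 2)]⟩
  let φ : ContDiffBump (0 : EuclideanSpace ℝ (Fin N)) := ⟨ρ / 2, ρ, half_pos hρ, half_lt_self hρ⟩
  obtain ⟨K, hφ⟩ := φ.contDiff.lipschitzWith_of_hasCompactSupport φ.hasCompactSupport one_ne_zero
  obtain ⟨η, hη, hgain⟩ := exists_pos_rpow_mul_lt hp
    (mul_pos (mul_pos hL (one_pos.trans hp)) (φ.integral_pos (μ := volume)))
    (dirichletEnergy volume p φ)
  by_contra! hle
  have hno_gain := lam1_mul_integral_le_of_lam1_le hp.le hab hρ hρa hρz hφ (fun _ ↦ φ.nonneg)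
    φ.tsupport_eq.subset hη.le hle
  linarith

end EccentricAnnulus

theorem stmt8_general (N : ℕ) [NeZero N] (p : ℝ) (hp : 1 < p)
    (R₀ R R₁ : ℝ) (hR₀ : 0 < R₀) (h0R : R₀ < R) (hRR : R < R₁) :
    ∃ Ω₁ Ω₂ : Set (EuclideanSpace ℝ (Fin N)),
      IsOpen Ω₁ ∧ IsOpen Ω₂ ∧ Ω₁.Nonempty ∧ Ω₂.Nonempty ∧ Disjoint Ω₁ Ω₂ ∧
      Ω₁ ⊆ ball (0 : EuclideanSpace ℝ (Fin N)) R₁ \ closure (ball 0 R₀) ∧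
      Ω₂ ⊆ ball (0 : EuclideanSpace ℝ (Fin N)) R₁ \ closure (ball 0 R₀) ∧
      lam1 p Ω₁ < lam1 p (ball (0 : EuclideanSpace ℝ (Fin N)) R \ closure (ball 0 R₀)) ∧
      lam1 p Ω₂ < lam1 p (ball (0 : EuclideanSpace ℝ (Fin N)) R₁ \ closure (ball 0 R)) := by
  have hR : 0 < R := hR₀.trans h0R
  have hpos : 0 < min (R - R₀) (R₁ - R) := lt_min (sub_pos.2 h0R) (sub_pos.2 hRR)
  obtain ⟨v, hv⟩ := exists_norm_eq (EuclideanSpace ℝ (Fin N)) hpos.le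
  have hv0 : v ≠ 0 := norm_pos_iff.1 (hv ▸ hpos)
  have hinner : closedBall 0 R₀ ⊆ closedBall v R := closedBall_subset_closedBall' <| by
    rw [dist_zero_left]; linarith [hv.trans_le (min_le_left _ _)]
  have houter : ball v R ⊆ ball 0 R₁ := ball_subset_ball' <| by
    rw [dist_zero_right]; linarith [hv.trans_le (min_le_right _ _)]
  rw [closure_ball _ hR₀.ne', closure_ball _ hR.ne']
  exact ⟨ball v R \ closedBall 0 R₀, ball 0 R₁ \ closedBall v R,
    isOpen_ball.sdiff isClosed_closedBall, isOpen_ball.sdiff isClosed_closedBall,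
    ball_sdiff_closedBall_nonempty 0 v hR₀.le h0R, ball_sdiff_closedBall_nonempty v 0 hR.le hRR,
    disjoint_sdiff_right.mono_left (sdiff_subset.trans ball_subset_closedBall),
    sdiff_subset_sdiff_left houter, sdiff_subset_sdiff_right hinner,
    lam1_eccentric_annulus_lt hp hR₀ h0R hv0.symm, lam1_eccentric_annulus_lt hp hR hRR hv0⟩

theorem stmt8 (N : ℕ) (hN : 2 ≤ N) (p : ℝ) (hp : 1 < p)
    (R₀ R R₁ : ℝ) (hR₀ : 0 < R₀) (h0R : R₀ < R) (hRR : R < R₁) :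
    ∃ Ω₁ Ω₂ : Set (EuclideanSpace ℝ (Fin N)),
      IsOpen Ω₁ ∧ IsOpen Ω₂ ∧ Ω₁.Nonempty ∧ Ω₂.Nonempty ∧ Disjoint Ω₁ Ω₂ ∧
      Ω₁ ⊆ ball (0 : EuclideanSpace ℝ (Fin N)) R₁ \ closure (ball 0 R₀) ∧
      Ω₂ ⊆ ball (0 : EuclideanSpace ℝ (Fin N)) R₁ \ closure (ball 0 R₀) ∧
      lam1 p Ω₁ < lam1 p (ball (0 : EuclideanSpace ℝ (Fin N)) R \ closure (ball 0 R₀)) ∧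
      lam1 p Ω₂ < lam1 p (ball (0 : EuclideanSpace ℝ (Fin N)) R₁ \ closure (ball 0 R)) :=
  haveI : NeZero N := ⟨by lia⟩
  stmt8_general N p hp R₀ R R₁ hR₀ h0R hRR
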